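/- The aggregation operator H has a unique fixed point r* ∈ ℝ^𝒜, i.e., there exists exactly one vector r* with r*_x = (Hr*)(x) for every x ∈ 𝒜. -/

import Mathlib

/-!
The operator factors as `H = D ∘ T ∘ Φ`, where `D` and `Φ` average against the disaggregation and
aggregation probabilities and `T` is the Bellman operator. In the supremum norm, averaging is
nonexpansive and taking a minimum over controls preserves Lipschitz constants, so `T` has Lipschitz
constant `α`, and so does `H`. Banach's fixed point theorem concludes.
-/

open Function Matrix
open scoped NNReal

section Lipschitz

variable {X R ι m n : Type*} [PseudoEMetricSpace X] [NonUnitalSeminormedRing R] [Fintype n]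
  {K : ℝ≥0}

theorem lipschitzWith_pi_iff {E : n → Type*} [∀ i, PseudoEMetricSpace (E i)]
    {f : X → ∀ i, E i} : LipschitzWith K f ↔ ∀ i, LipschitzWith K (fun x ↦ f x i) := by
  simp only [LipschitzWith, edist_pi_le_iff]
  exact ⟨fun h i x y ↦ h x y i, fun h x y i ↦ h i x y⟩

theorem lipschitzWith_finset_inf' {s : Finset ι} (hs : s.Nonempty) {f : ι → X → ℝ}
    (hf : ∀ i ∈ s, LipschitzWith K (f i)) : LipschitzWith K (fun x ↦ s.inf' hs (f · x)) := by
  have h_inf : LipschitzWith K (s.inf' hs f) :=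
    Finset.inf'_induction hs f (fun _ h₁ _ h₂ ↦ max_self K ▸ h₁.min h₂) hf
  convert h_inf using 2 with x
  exact (Finset.inf'_apply hs f x).symm

theorem lipschitzWith_dotProduct {w : n → R} (hw : ∑ j, ‖w j‖₊ ≤ K) :
    LipschitzWith K (fun v : n → R ↦ w ⬝ᵥ v) := by
  have h_nndist (v v' : n → R) : nndist (w ⬝ᵥ v) (w ⬝ᵥ v') ≤ K * nndist v v' :=
    calc nndist (w ⬝ᵥ v) (w ⬝ᵥ v')
        = ‖∑ j, w j * (v j - v' j)‖₊ := by
          rw [nndist_eq_nnnorm, ← dotProduct_sub]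
          rfl
      _ ≤ ∑ j, ‖w j‖₊ * ‖v j - v' j‖₊ :=
          nnnorm_sum_le_of_le _ fun j _ ↦ nnnorm_mul_le _ _
      _ ≤ ∑ j, ‖w j‖₊ * nndist v v' := by
          gcongr with j
          rw [← nndist_eq_nnnorm]
          exact nndist_le_pi_nndist v v' j
      _ ≤ K * nndist v v' := by
          rw [← Finset.sum_mul]
          gcongr
  exact LipschitzWith.of_dist_le_mul fun v v' ↦ mod_cast h_nndist v v'

theorem lipschitzWith_mulVec [Fintype m] {M : Matrix m n R} (hM : ∀ i, ∑ j, ‖M i j‖₊ ≤ K) :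
    LipschitzWith K (fun v : n → R ↦ M *ᵥ v) :=
  lipschitzWith_pi_iff.2 fun i ↦ lipschitzWith_dotProduct (hM i)

end Lipschitz

theorem sum_nnnorm_eq_one_of_nonneg {n : Type*} [Fintype n] {w : n → ℝ} (hw : ∀ j, 0 ≤ w j)
    (hw1 : ∑ j, w j = 1) : ∑ j, ‖w j‖₊ = 1 := by
  simpa [← NNReal.coe_inj, abs_of_nonneg (hw _)] using hw1

theorem existsUnique_isFixedPt_of_contractingWith {X : Type*} [MetricSpace X] [CompleteSpace X]
    [Nonempty X] {K : ℝ≥0} {f : X → X} (hf : ContractingWith K f) : ∃! x, IsFixedPt f x :=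
  ⟨hf.fixedPoint, hf.fixedPoint_isFixedPt, fun _ hx ↦ hf.fixedPoint_unique hx⟩

section Aggregation

variable {S C A : Type*} [Fintype S] [Fintype A]

/-- The Bellman operator `T` of the decision problem with states `S`, control sets `U i`, transition
weights `p`, stage costs `g` and discount factor `α`, acting on cost vectors `J`. The weights
`p i u` need not be probabilities. -/
noncomputable def bellmanOperator (U : S → Finset C) (hU : ∀ i, (U i).Nonempty) (α : ℝ)
    (p g : S → C → S → ℝ) (J : S → ℝ) : S → ℝ :=
  fun i ↦ (U i).inf' (hU i) fun u ↦ p i u ⬝ᵥ (g i u + α • J)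

/-- The aggregation operator `H = D ∘ T ∘ Φ`, with the disaggregation weights `d x i` and the
aggregation weights `φ j y` taken as matrices. -/
noncomputable def aggregationOperator (U : S → Finset C) (hU : ∀ i, (U i).Nonempty) (α : ℝ)
    (p g : S → C → S → ℝ) (d : Matrix A S ℝ) (φ : Matrix S A ℝ) (r : A → ℝ) : A → ℝ :=
  d *ᵥ bellmanOperator U hU α p g (φ *ᵥ r)

variable {U : S → Finset C} (hU : ∀ i, (U i).Nonempty) {α : ℝ} {p : S → C → S → ℝ}
  (g : S → C → S → ℝ) {d : Matrix A S ℝ} {φ : Matrix S A ℝ} {Kp Kd Kφ : ℝ≥0}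

theorem lipschitzWith_bellmanOperator (hp : ∀ i, ∀ u ∈ U i, ∑ j, ‖p i u j‖₊ ≤ Kp) :
    LipschitzWith (Kp * ‖α‖₊) (bellmanOperator U hU α p g) := by
  refine lipschitzWith_pi_iff.2 fun i ↦ lipschitzWith_finset_inf' (hU i) fun u hu ↦ ?_
  have h_cost : LipschitzWith ‖α‖₊ (fun J : S → ℝ ↦ g i u + α • J) := by
    simpa only [zero_add] using (LipschitzWith.const (g i u)).add (lipschitzWith_smul α)
  exact (lipschitzWith_dotProduct (hp i u hu)).comp h_cost

theorem lipschitzWith_aggregationOperator (hp : ∀ i, ∀ u ∈ U i, ∑ j, ‖p i u j‖₊ ≤ Kp)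
    (hd : ∀ x, ∑ i, ‖d x i‖₊ ≤ Kd) (hφ : ∀ j, ∑ y, ‖φ j y‖₊ ≤ Kφ) :
    LipschitzWith (Kd * (Kp * ‖α‖₊ * Kφ)) (aggregationOperator U hU α p g d φ) :=
  (lipschitzWith_mulVec hd).comp
    ((lipschitzWith_bellmanOperator hU g hp).comp (lipschitzWith_mulVec hφ))

theorem aggregation_operator_unique_fixed_point_general
    (hp : ∀ i, ∀ u ∈ U i, ∑ j, ‖p i u j‖₊ ≤ Kp) (hd : ∀ x, ∑ i, ‖d x i‖₊ ≤ Kd)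
    (hφ : ∀ j, ∑ y, ‖φ j y‖₊ ≤ Kφ) (hK : Kd * (Kp * ‖α‖₊ * Kφ) < 1) :
    ∃! r, IsFixedPt (aggregationOperator U hU α p g d φ) r :=
  existsUnique_isFixedPt_of_contractingWith
    ⟨hK, lipschitzWith_aggregationOperator hU g hp hd hφ⟩

end Aggregation

/-- The aggregation operator `H` has a unique fixed point `r*`. -/
theorem aggregation_operator_unique_fixed_point
    (n : ℕ) [NeZero n] (C A : Type) [Fintype A] [Nonempty A]
    (U : Fin n → Finset C) (hU : ∀ i, (U i).Nonempty)
    (α : ℝ) (hα0 : 0 < α) (hα1 : α < 1)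
    (p g : Fin n → C → Fin n → ℝ)
    (hp : ∀ i, ∀ u ∈ U i, ∀ j, 0 ≤ p i u j)
    (hp1 : ∀ i, ∀ u ∈ U i, ∑ j, p i u j = 1)
    (d : A → Fin n → ℝ) (hd : ∀ x i, 0 ≤ d x i) (hd1 : ∀ x, ∑ i, d x i = 1)
    (φ : Fin n → A → ℝ) (hφ : ∀ j y, 0 ≤ φ j y) (hφ1 : ∀ j, ∑ y, φ j y = 1)
    (H : (A → ℝ) → A → ℝ)
    (hH : ∀ r x, H r x = ∑ i, d x i * (U i).inf' (hU i)
      (fun u => ∑ j, p i u j * (g i u j + α * ∑ y, φ j y * r y))) :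
    ∃! r : A → ℝ, ∀ x, r x = H r x := by
  obtain rfl : H = aggregationOperator U hU α p g d φ := funext₂ hH
  have hα : 1 * (1 * ‖α‖₊ * 1) < 1 := by
    simpa [← NNReal.coe_lt_coe, abs_of_pos hα0] using hα1
  simpa only [IsFixedPt, funext_iff, eq_comm] using
    aggregation_operator_unique_fixed_point_general hU g
      (fun i u hu ↦ (sum_nnnorm_eq_one_of_nonneg (hp i u hu) (hp1 i u hu)).le)
      (fun x ↦ (sum_nnnorm_eq_one_of_nonneg (hd x) (hd1 x)).le)
      (fun j ↦ (sum_nnnorm_eq_one_of_nonneg (hφ j) (hφ1 j)).le) hα
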